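/- Let (a_k)_{k=0}^∞ be a nonnegative sequence with a_k > 0 for 0 ≤ k ≤ 3 and a_k = 0 for all k ≥ 4. Then (a_k) is a TP_∞-preserver if and only if both polynomials a_0 + a_1 x + a_2 x^2 + a_3 x^3 and a_1 x + a_2 x^2 + a_3 x^3 have only real (necessarily nonpositive) zeros. Moreover, (a_k) maps every TP_∞ sequence to a TP_∞ sequence if and only if it maps every 3-times positive sequence to a TP_∞ sequence. -/

import Mathlib

/-- A real sequence `(a_k)` is totally positive (TP_∞) if all finite minors of the
infinite Toeplitz matrix `(a_{j-i})` (with `a_k = 0` for `k < 0`) are nonnegative. -/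
def IsTotallyPositive (a : ℕ → ℝ) : Prop :=
  ∀ (n : ℕ) (i j : Fin n → ℕ), StrictMono i → StrictMono j →
    0 ≤ (Matrix.of fun p q : Fin n => if i p ≤ j q then a (j q - i p) else 0).det

/-- A real sequence is `m`-times positive (TP_m) if all such minors of order at most `m`
are nonnegative. -/
def IsMultiplyPositive (m : ℕ) (a : ℕ → ℝ) : Prop :=
  ∀ (n : ℕ), n ≤ m → ∀ (i j : Fin n → ℕ), StrictMono i → StrictMono j →
    0 ≤ (Matrix.of fun p q : Fin n => if i p ≤ j q then a (j q - i p) else 0).det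

/-- A nonnegative sequence `(a_k)` is a TP_∞-preserver if for every totally positive
sequence `(b_k)`, the sequence `(a_k b_k)` is totally positive. -/
def IsTPPreserver (a : ℕ → ℝ) : Prop :=
  ∀ b : ℕ → ℝ, IsTotallyPositive b → IsTotallyPositive (fun k => a k * b k)

/-!
A polynomial with nonnegative coefficients and only real zeros is a product of linear factors
`c + d x` with `c, d ≥ 0`, and multiplication by such a factor preserves total positivity.
Conversely, suppose `P(x) = (x² + βx + γ)(c + dx)` is totally positive and the quadratic factor has
no real zero. By Jacobi's identity for the minors of an inverse matrix, the coefficients of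
`1 / P(-x)` are nonnegative and log-concave, so those of `(c - dx) / P(-x)` change sign at most
once. But these are the coefficients of `1 / (x² - βx + γ)`, which oscillate. Hence a cubic with
nonnegative coefficients is totally positive iff its discriminant is nonnegative.

The two cubics of the theorem are the images of the sequences `1, 1, 1, …` and `0, 1, 1, …`, which
gives necessity. For sufficiency, rescaling reduces a TP₃ sequence to `1, 1, u, v` with
`max 0 (2u - 1) ≤ v ≤ u²`. The discriminant is concave in the coefficient that carries `v`, so it
has to be checked only at the two ends of this interval.
-/

section Toeplitz

/-- The infinite upper triangular Toeplitz matrix `(a_{j-i})` of a sequence, with `a_k = 0` for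
`k < 0`. -/
def toeplitz {R : Type*} [Zero R] (a : ℕ → R) : Matrix ℕ ℕ R :=
  Matrix.of fun i j => if i ≤ j then a (j - i) else 0

section

variable {R : Type*} [Zero R] {a : ℕ → R} {i j : ℕ}

theorem toeplitz_of_le (a : ℕ → R) (h : i ≤ j) : toeplitz a i j = a (j - i) := if_pos h

theorem toeplitz_of_lt (a : ℕ → R) (h : j < i) : toeplitz a i j = 0 := if_neg h.not_ge

end

theorem isTotallyPositive_iff_toeplitz {a : ℕ → ℝ} :
    IsTotallyPositive a ↔ ∀ (n : ℕ) (i j : Fin n → ℕ), StrictMono i → StrictMono j →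
      0 ≤ ((toeplitz a).submatrix i j).det :=
  Iff.rfl

namespace IsTotallyPositive

variable {a b : ℕ → ℝ}

theorem nonneg (ha : IsTotallyPositive a) (k : ℕ) : 0 ≤ a k := by
  simpa using ha 1 ![0] ![k] (Subsingleton.strictMono _) (Subsingleton.strictMono _)

theorem isMultiplyPositive (ha : IsTotallyPositive a) (m : ℕ) : IsMultiplyPositive m a :=
  fun n _ => ha n

theorem det_nonneg_of_monotone (ha : IsTotallyPositive a) {n : ℕ} {i j : Fin n → ℕ}
    (hi : Monotone i) (hj : StrictMono j) : 0 ≤ ((toeplitz a).submatrix i j).det := by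
  by_cases hinj : Function.Injective i
  · exact ha n i j (hi.strictMono_of_injective hinj) hj
  · obtain ⟨p, p', hpp, hne⟩ := Function.not_injective_iff.mp hinj
    refine (Matrix.det_zero_of_row_eq hne ?_).ge
    ext q
    rw [Matrix.submatrix_apply, Matrix.submatrix_apply, hpp]

-- The rows of the new Toeplitz matrix are `c • row i + d • row (i + 1)`, and expanding its minors
-- multilinearly never breaks the order of the rows.
theorem mul_linear (ha : IsTotallyPositive a) {c d : ℝ} (hc : 0 ≤ c) (hd : 0 ≤ d)
    (h0 : b 0 = c * a 0) (hsucc : ∀ k, b (k + 1) = c * a (k + 1) + d * a k) :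
    IsTotallyPositive b := by
  intro n i j hi hj
  have hrow (p q : ℕ) : toeplitz b p q = c * toeplitz a p q + d * toeplitz a (p + 1) q := by
    rcases lt_trichotomy p q with h | rfl | h
    · obtain ⟨k, rfl⟩ := Nat.exists_eq_add_of_lt h
      rw [toeplitz_of_le _ h.le, toeplitz_of_le _ h.le, toeplitz_of_le _ h,
        show p + k + 1 - p = k + 1 by omega, show p + k + 1 - (p + 1) = k by omega, hsucc]
    · simp [toeplitz, h0]
    · rw [toeplitz_of_lt _ h, toeplitz_of_lt _ h, toeplitz_of_lt _ (by omega), mul_zero, mul_zero,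
        add_zero]
  have hsplit : (toeplitz b).submatrix i j = (fun p => c • fun q => toeplitz a (i p) (j q)) +
      (fun p => d • fun q => toeplitz a (i p + 1) (j q)) := by
    ext p q
    exact hrow _ _
  change 0 ≤ Matrix.detRowAlternating ((toeplitz b).submatrix i j)
  rw [hsplit, AlternatingMap.map_add_univ]
  refine Finset.sum_nonneg fun s _ => ?_
  have hpiece : s.piecewise (fun p => c • fun q => toeplitz a (i p) (j q))
      (fun p => d • fun q => toeplitz a (i p + 1) (j q)) =
      fun p => (if p ∈ s then c else d) •
        fun q => toeplitz a (if p ∈ s then i p else i p + 1) (j q) := by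
    funext p
    by_cases hp : p ∈ s <;> simp [hp]
  rw [hpiece, AlternatingMap.map_smul_univ]
  refine mul_nonneg (Finset.prod_nonneg fun p _ => by split_ifs <;> assumption) ?_
  refine ha.det_nonneg_of_monotone (fun p p' hpp => ?_) hj
  rcases hpp.eq_or_lt with rfl | hlt
  · rfl
  · have := hi hlt
    split_ifs <;> omega

theorem comp_succ (ha : IsTotallyPositive a) (h0 : a 0 = 0) :
    IsTotallyPositive fun k => a (k + 1) := by
  intro n i j hi hj
  convert ha n i (fun q => j q + 1) hi (hj.add_const 1) using 2
  ext p q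
  simp only [Matrix.of_apply]
  rcases le_or_gt (i p) (j q) with h | h
  · rw [if_pos h, if_pos (by omega), Nat.sub_add_comm h]
  · rcases (Nat.succ_le_of_lt h).eq_or_lt with h' | h'
    · rw [if_neg h.not_ge, if_pos h'.ge, ← h']
      simp [h0]
    · rw [if_neg h.not_ge, if_neg (by omega)]

end IsTotallyPositive

theorem isTotallyPositive_pow {c : ℝ} (hc : 0 ≤ c) : IsTotallyPositive (c ^ ·) := by
  rw [isTotallyPositive_iff_toeplitz]
  intro n i j hi hj
  induction n with
  | zero => simp
  | succ n ih =>
    set A := (toeplitz (c ^ ·)).submatrix i j with hA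
    by_cases hcol : ∃ p : Fin n, i p.succ ≤ j 0
    · obtain ⟨p, hp⟩ := hcol
      have hrow : A 0 + -c ^ (i p.succ - i 0) • A p.succ = 0 := by
        ext q
        have hi0 : i 0 ≤ i p.succ := hi.monotone (Fin.zero_le _)
        have hj0 : j 0 ≤ j q := hj.monotone (Fin.zero_le _)
        simp only [hA, Pi.add_apply, Pi.smul_apply, Matrix.submatrix_apply, smul_eq_mul,
          Pi.zero_apply]
        rw [toeplitz_of_le _ (by omega), toeplitz_of_le _ (by omega), neg_mul, ← pow_add,
          show i p.succ - i 0 + (j q - i p.succ) = j q - i 0 by omega, add_neg_cancel]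
      rw [← Matrix.det_updateRow_add_smul_self A (Fin.succ_ne_zero p).symm
        (-c ^ (i p.succ - i 0)), hrow]
      exact (Matrix.det_eq_zero_of_row_eq_zero 0 fun q => by simp).ge
    · push Not at hcol
      rw [Matrix.det_succ_column_zero, Fin.sum_univ_succ, Finset.sum_eq_zero fun p _ => by
        rw [hA, Matrix.submatrix_apply, toeplitz_of_lt _ (hcol p), mul_zero, zero_mul]]
      simp only [Fin.val_zero, pow_zero, one_mul, add_zero]
      refine mul_nonneg ?_ (ih _ _ (hi.comp Fin.strictMono_succ) (hj.comp Fin.strictMono_succ))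
      simp only [hA, toeplitz, Matrix.submatrix_apply, Matrix.of_apply]
      split_ifs <;> positivity

theorem isTotallyPositive_one : IsTotallyPositive fun _ => 1 := by
  simpa using isTotallyPositive_pow zero_le_one

theorem isTotallyPositive_zero_one : IsTotallyPositive fun k => if k = 0 then 0 else 1 :=
  isTotallyPositive_one.mul_linear le_rfl zero_le_one (by simp) (by simp)

end Toeplitz

section RealRootedPolynomials

open Polynomial

theorem roots_nonpos_of_coeff_nonneg {P : ℝ[X]} (hP : ∀ k, 0 ≤ P.coeff k) {x : ℝ}
    (hx : x ∈ P.roots) : x ≤ 0 := by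
  by_contra! hpos
  have hP0 : P ≠ 0 := ne_zero_of_mem_roots hx
  have hroot : P.eval x = 0 := isRoot_of_mem_roots hx
  rw [eval_eq_sum_range, Finset.sum_eq_zero_iff_of_nonneg fun k _ =>
    mul_nonneg (hP k) (pow_nonneg hpos.le k)] at hroot
  have := hroot P.natDegree (Finset.self_mem_range_succ _)
  rw [mul_eq_zero_iff_right (pow_pos hpos _).ne', coeff_natDegree, leadingCoeff_eq_zero] at this
  exact hP0 this

theorem IsTotallyPositive.of_splits {P : ℝ[X]} (hP : P.Splits) (hcoeff : ∀ k, 0 ≤ P.coeff k) :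
    IsTotallyPositive P.coeff := by
  have hprod (s : Multiset ℝ) (hs : ∀ x ∈ s, x ≤ 0) :
      IsTotallyPositive (C P.leadingCoeff * (s.map (X - C ·)).prod).coeff := by
    induction s using Multiset.induction with
    | empty =>
      refine (isTotallyPositive_pow le_rfl).mul_linear (hcoeff P.natDegree) le_rfl ?_ ?_
      · simp
      · simp
    | cons x s ih =>
      rw [Multiset.forall_mem_cons] at hs
      refine (ih hs.2).mul_linear (neg_nonneg.mpr hs.1) zero_le_one ?_ fun k => ?_
      · rw [Multiset.map_cons, Multiset.prod_cons, mul_left_comm, mul_coeff_zero]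
        simp
      · rw [Multiset.map_cons, Multiset.prod_cons, mul_left_comm, sub_mul, coeff_sub, coeff_X_mul]
        simp only [coeff_C_mul]
        ring
  rw [hP.eq_prod_roots]
  exact hprod _ fun x => roots_nonpos_of_coeff_nonneg hcoeff

end RealRootedPolynomials

section RealSplitting

open Polynomial

theorem splits_iff_forall_aeval_complex {P : ℝ[X]} (hP : P ≠ 0) :
    P.Splits ↔ ∀ z : ℂ, aeval z P = 0 → ∃ x : ℝ, z = x := by
  constructor
  · intro h z hz
    obtain ⟨x, hx⟩ := h.mem_range_of_isRoot (i := algebraMap ℝ ℂ) hP (by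
      rwa [IsRoot, eval_map_algebraMap])
    exact ⟨x, hx.symm⟩
  · intro h
    refine Splits.of_splits_map (algebraMap ℝ ℂ) (IsAlgClosed.splits _) fun z hz => ?_
    obtain ⟨x, rfl⟩ := h z (by rw [← eval_map_algebraMap]; exact isRoot_of_mem_roots hz)
    exact ⟨x, rfl⟩

theorem exists_quadratic_dvd_of_not_splits {P : ℝ[X]} (hP : ¬ P.Splits) :
    ∃ β γ : ℝ, discrim 1 β γ < 0 ∧ X ^ 2 + C β * X + C γ ∣ P := by
  have hP0 : P ≠ 0 := by
    rintro rfl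
    exact hP Splits.zero
  rw [splits_iff_forall_aeval_complex hP0] at hP
  push Not at hP
  obtain ⟨z, hz, hreal⟩ := hP
  have him : z.im ≠ 0 := fun h => hreal z.re (Complex.ext rfl (by simpa using h))
  refine ⟨-(2 * z.re), ‖z‖ ^ 2, ?_, ?_⟩
  · rw [discrim, Complex.sq_norm, Complex.normSq_apply]
    nlinarith [sq_pos_of_ne_zero him]
  · simpa [sub_eq_add_neg] using quadratic_dvd_of_aeval_eq_zero_im_ne_zero P hz him

theorem exists_eq_quadratic_mul_linear_of_not_splits {P : ℝ[X]} (hP : ¬ P.Splits)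
    (hdeg : P.natDegree ≤ 3) :
    ∃ β γ d c : ℝ, discrim 1 β γ < 0 ∧ P = (X ^ 2 + C β * X + C γ) * (C d * X + C c) := by
  obtain ⟨β, γ, hdisc, R, rfl⟩ := exists_quadratic_dvd_of_not_splits hP
  have hR0 : R ≠ 0 := by
    rintro rfl
    exact hP (by simp)
  have hQdeg : (X ^ 2 + C β * X + C γ).natDegree = 2 := by
    simpa using natDegree_quadratic (b := β) (c := γ) one_ne_zero
  rw [natDegree_mul (by rintro h; simp [h] at hQdeg) hR0, hQdeg] at hdeg
  obtain ⟨d, c, rfl⟩ := exists_eq_X_add_C_of_natDegree_le_one (show R.natDegree ≤ 1 by omega)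
  exact ⟨β, γ, d, c, hdisc, rfl⟩

theorem cubic_natDegree_le {R : Type*} [Semiring R] (P : Cubic R) : P.toPoly.natDegree ≤ 3 :=
  natDegree_le_iff_coeff_eq_zero.mpr fun _ hn => P.coeff_eq_zero hn

theorem cubic_discr_nonneg_of_splits {P : Cubic ℝ} (hP : P.toPoly.Splits) : 0 ≤ P.discr := by
  rcases eq_or_ne P.a 0 with ha | ha
  · have hdiscr : P.discr = P.b ^ 2 * discrim P.b P.c P.d := by
      simp only [Cubic.discr, discrim, ha]
      ring
    rcases eq_or_ne P.b 0 with hb | hb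
    · simp [hdiscr, hb]
    · obtain ⟨x, hx⟩ := hP.exists_eval_eq_zero (by simp [Cubic.degree_of_b_ne_zero ha hb])
      rw [Cubic.of_a_eq_zero ha] at hx
      have hsq : discrim P.b P.c P.d = (2 * P.b * x + P.c) ^ 2 :=
        discrim_eq_sq_of_quadratic_eq_zero (by simpa [pow_two] using hx)
      rw [hdiscr, hsq]
      positivity
  · rw [← Polynomial.map_id (p := P.toPoly)] at hP
    obtain ⟨x, y, z, hroots⟩ := (Cubic.splits_iff_roots_eq_three ha).mp hP
    have := Cubic.discr_eq_prod_three_roots ha hroots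
    rw [RingHom.id_apply] at this
    rw [this]
    positivity

-- The discriminant of a product `QR` is `disc Q * disc R * (Res (Q, R)) ^ 2`.
theorem cubic_discr_neg_of_not_splits {P : Cubic ℝ} (hP : ¬ P.toPoly.Splits) : P.discr < 0 := by
  obtain ⟨β, γ, d, c, hdisc, hfac⟩ :=
    exists_eq_quadratic_mul_linear_of_not_splits hP (cubic_natDegree_le P)
  obtain rfl : P = ⟨d, c + β * d, β * c + γ * d, γ * c⟩ := by
    rw [← Cubic.toPoly_injective, hfac, Cubic.toPoly]
    simp only [C_add, C_mul]
    ring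
  have hdiscr : (Cubic.mk d (c + β * d) (β * c + γ * d) (γ * c)).discr =
      discrim 1 β γ * (c ^ 2 - β * c * d + γ * d ^ 2) ^ 2 := by
    simp only [Cubic.discr, discrim]
    ring
  have hres : c ^ 2 - β * c * d + γ * d ^ 2 ≠ 0 := by
    intro hres
    have hd : d = 0 := by
      by_contra hd
      have : 0 < (2 * c - β * d) ^ 2 - discrim 1 β γ * d ^ 2 := by
        linarith [sq_nonneg (2 * c - β * d), mul_neg_of_neg_of_pos hdisc (sq_pos_of_ne_zero hd)]
      rw [discrim] at this
      linarith
    have hc : c = 0 := by simpa [hd] using hres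
    exact hP (by rw [hfac, hc, hd]; simp)
  rw [hdiscr]
  exact mul_neg_of_neg_of_pos hdisc (sq_pos_of_ne_zero hres)

theorem cubic_splits_iff_discr_nonneg {P : Cubic ℝ} : P.toPoly.Splits ↔ 0 ≤ P.discr :=
  ⟨cubic_discr_nonneg_of_splits, fun h => by
    by_contra hP
    exact (cubic_discr_neg_of_not_splits hP).not_ge h⟩

end RealSplitting

section CubicMultipliers

variable {a b c d : ℝ}

theorem concaveOn_cubic_discr_leadingCoeff (b c d : ℝ) :
    ConcaveOn ℝ Set.univ fun a => (Cubic.mk a b c d).discr := by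
  refine ⟨convex_univ, fun x _ y _ s t hs ht hst => ?_⟩
  obtain rfl : t = 1 - s := by linarith
  have hgap : (Cubic.mk (s • x + (1 - s) • y) b c d).discr =
      s • (Cubic.mk x b c d).discr + (1 - s) • (Cubic.mk y b c d).discr +
        s * (1 - s) * (27 * d ^ 2 * (x - y) ^ 2) := by
    simp only [Cubic.discr, smul_eq_mul]
    ring
  beta_reduce
  rw [hgap, le_add_iff_nonneg_right]
  positivity

theorem cubic_discr_nonneg_of_mem_Icc {l r : ℝ} (hl : 0 ≤ (Cubic.mk l b c d).discr)
    (hr : 0 ≤ (Cubic.mk r b c d).discr) (ha : a ∈ Set.Icc l r) :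
    0 ≤ (Cubic.mk a b c d).discr :=
  (le_min hl hr).trans <| (concaveOn_cubic_discr_leadingCoeff b c d).min_le_of_mem_Icc
    (Set.mem_univ l) (Set.mem_univ r) ha

theorem cubic_discr_reverse {R : Type*} [CommRing R] (a b c d : R) :
    (Cubic.mk d c b a).discr = (Cubic.mk a b c d).discr := by
  simp only [Cubic.discr]
  ring

theorem cubic_discr_scale {R : Type*} [CommRing R] (a b c d s t : R) :
    (Cubic.mk (s * t ^ 3 * a) (s * t ^ 2 * b) (s * t * c) (s * d)).discr =
      s ^ 4 * t ^ 6 * (Cubic.mk a b c d).discr := by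
  simp only [Cubic.discr]
  ring

theorem cubic_discr_of_d_eq_zero {R : Type*} [CommRing R] (a b c : R) :
    (Cubic.mk a b c 0).discr = c ^ 2 * discrim a b c := by
  simp only [Cubic.discr, discrim]
  ring

theorem newton_inequality_of_cubic_discr_nonneg (hdiscr : 0 ≤ (Cubic.mk a b c d).discr) :
    3 * b * d ≤ c ^ 2 := by
  have hcube : 4 * (c ^ 2 - 3 * b * d) ^ 3 =
      (2 * c ^ 3 - 9 * b * c * d + 27 * a * d ^ 2) ^ 2 +
        27 * d ^ 2 * (Cubic.mk a b c d).discr := by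
    simp only [Cubic.discr]
    ring
  have : 0 ≤ (c ^ 2 - 3 * b * d) ^ 3 := by
    have : 0 ≤ 27 * d ^ 2 * (Cubic.mk a b c d).discr := by positivity
    nlinarith [sq_nonneg (2 * c ^ 3 - 9 * b * c * d + 27 * a * d ^ 2)]
  linarith [(Odd.pow_nonneg_iff (by decide : Odd 3)).mp this]

theorem cubic_discr_nonneg_of_sq_multiplier {u : ℝ} (hu : u ∈ Set.Icc 0 1) (hd : 0 ≤ d)
    (hdiscr : 0 ≤ (Cubic.mk a b c d).discr) (hdiscrim : 0 ≤ discrim a b c) :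
    0 ≤ (Cubic.mk (a * u ^ 2) (b * u) c d).discr := by
  have hzero : 0 ≤ (Cubic.mk 0 c b a).discr := by
    rw [cubic_discr_reverse, cubic_discr_of_d_eq_zero]
    positivity
  have hmid : 0 ≤ (Cubic.mk a b c (u * d)).discr := by
    rw [← cubic_discr_reverse] at hdiscr ⊢
    exact cubic_discr_nonneg_of_mem_Icc hzero hdiscr
      ⟨mul_nonneg hu.1 hd, mul_le_of_le_one_left hd hu.2⟩
  have hscale : (Cubic.mk (a * u ^ 2) (b * u) c d).discr =
      u ^ 2 * (Cubic.mk a b c (u * d)).discr := by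
    simp only [Cubic.discr]
    ring
  rw [hscale]
  positivity

theorem cubic_discr_nonneg_of_linear_multiplier {u : ℝ} (hu : u ∈ Set.Icc (1 / 2) 1)
    (ha : 0 ≤ a) (hb : 0 ≤ b) (hc : 0 ≤ c) (hd : 0 ≤ d)
    (hdiscr : 0 ≤ (Cubic.mk a b c d).discr) (hdiscrim : 0 ≤ discrim a b c) :
    0 ≤ (Cubic.mk (a * (2 * u - 1)) (b * u) c d).discr := by
  have hnewton : 0 ≤ c ^ 2 - 3 * b * d := by
    linarith [newton_inequality_of_cubic_discr_nonneg hdiscr]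
  have hexpand : (Cubic.mk (a * (2 * u - 1)) (b * u) c d).discr =
      (2 * u - 1) ^ 2 * (Cubic.mk a b c d).discr +
        (1 - u) * ((c ^ 2 - 3 * b * d) * discrim a b c * (3 * u - 1) +
          b * d * discrim a b c * (4 * u ^ 2 - 3 * u + 1) +
          4 * a * c * (c ^ 2 - 3 * b * d) * (1 - u) +
          2 * a * b * c * d * (8 * u ^ 2 - 12 * u + 5)) := by
    simp only [Cubic.discr, discrim]
    ring
  have h₁ : 0 ≤ 1 - u := by linarith [hu.2]
  have h₂ : 0 ≤ 3 * u - 1 := by linarith [hu.1]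
  have h₃ : 0 ≤ 4 * u ^ 2 - 3 * u + 1 := by nlinarith [sq_nonneg (8 * u - 3)]
  have h₄ : 0 ≤ 8 * u ^ 2 - 12 * u + 5 := by nlinarith [sq_nonneg (4 * u - 3)]
  rw [hexpand]
  positivity

theorem cubic_discr_nonneg_of_multipliers {u v : ℝ} (hu : u ∈ Set.Icc 0 1)
    (hv : v ∈ Set.Icc (max 0 (2 * u - 1)) (u ^ 2)) (ha : 0 ≤ a) (hb : 0 ≤ b) (hc : 0 ≤ c)
    (hd : 0 ≤ d) (hdiscr : 0 ≤ (Cubic.mk a b c d).discr) (hdiscrim : 0 ≤ discrim a b c) :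
    0 ≤ (Cubic.mk (a * v) (b * u) c d).discr := by
  have hleft : 0 ≤ (Cubic.mk (a * max 0 (2 * u - 1)) (b * u) c d).discr := by
    rcases le_total u (1 / 2) with hu' | hu'
    · have hnewton := newton_inequality_of_cubic_discr_nonneg hdiscr
      have hlin : b * u * d ≤ b * d * (1 / 2) := by
        rw [mul_right_comm]
        gcongr
      rw [max_eq_left (by linarith), mul_zero, ← cubic_discr_reverse, cubic_discr_of_d_eq_zero,
        discrim]
      refine mul_nonneg (sq_nonneg _) ?_
      nlinarith [mul_nonneg hb hd]
    · rw [max_eq_right (by linarith)]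
      exact cubic_discr_nonneg_of_linear_multiplier ⟨hu', hu.2⟩ ha hb hc hd hdiscr hdiscrim
  exact cubic_discr_nonneg_of_mem_Icc hleft
    (cubic_discr_nonneg_of_sq_multiplier hu hd hdiscr hdiscrim)
    ⟨mul_le_mul_of_nonneg_left hv.1 ha, mul_le_mul_of_nonneg_left hv.2 ha⟩

end CubicMultipliers

section MultiplyPositive

namespace IsMultiplyPositive

variable {m : ℕ} {s : ℕ → ℝ}

theorem nonneg (hs : IsMultiplyPositive m s) (hm : 1 ≤ m) (k : ℕ) : 0 ≤ s k := by
  simpa using hs 1 hm ![0] ![k] (Subsingleton.strictMono _) (Subsingleton.strictMono _)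

theorem mul_succ_le (hs : IsMultiplyPositive m s) (hm : 2 ≤ m) {k l : ℕ} (hkl : k ≤ l) :
    s k * s (l + 1) ≤ s (k + 1) * s l := by
  rcases hkl.eq_or_lt with rfl | hlt
  · rw [mul_comm]
  · rw [mul_comm (s k)]
    simpa [Matrix.det_fin_two] using hs 2 hm ![0, 1] ![k + 1, l + 1] (by simp) (by simpa)

theorem two_mul_le_pow_three_add (hs : IsMultiplyPositive m s) (hm : 3 ≤ m) :
    2 * (s 0 * s 1 * s 2) ≤ s 1 ^ 3 + s 0 ^ 2 * s 3 := by
  have hminor := hs 3 hm ![0, 1, 2] ![1, 2, 3] (by decide) (by decide)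
  have hexpand : (Matrix.of fun p q : Fin 3 => if (![0, 1, 2] : Fin 3 → ℕ) p ≤ ![1, 2, 3] q then
      s (![1, 2, 3] q - ![0, 1, 2] p) else 0).det =
        s 1 ^ 3 + s 0 ^ 2 * s 3 - 2 * (s 0 * s 1 * s 2) := by
    simp [Matrix.det_fin_three]
    ring
  exact sub_nonneg.mp (hexpand ▸ hminor)

end IsMultiplyPositive

theorem cubic_discr_nonneg_of_isMultiplyPositive {a b c d : ℝ} {s : ℕ → ℝ}
    (hs : IsMultiplyPositive 3 s) (ha : 0 ≤ a) (hb : 0 ≤ b) (hc : 0 ≤ c) (hd : 0 ≤ d)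
    (hdiscr : 0 ≤ (Cubic.mk a b c d).discr) (hdiscrim : 0 ≤ discrim a b c) :
    0 ≤ (Cubic.mk (a * s 3) (b * s 2) (c * s 1) (d * s 0)).discr := by
  have hnonneg (k : ℕ) : 0 ≤ s k := hs.nonneg (by norm_num) k
  have h02 : s 0 * s 2 ≤ s 1 * s 1 := hs.mul_succ_le (by norm_num) zero_le_one
  have h13 : s 1 * s 3 ≤ s 2 * s 2 := hs.mul_succ_le (by norm_num) one_le_two
  have h03 : s 0 * s 3 ≤ s 1 * s 2 := hs.mul_succ_le (by norm_num) zero_le_two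
  have hthree := hs.two_mul_le_pow_three_add le_rfl
  rcases (hnonneg 0).eq_or_lt' with h0 | h0
  · rw [h0, mul_zero, cubic_discr_of_d_eq_zero]
    refine mul_nonneg (sq_nonneg _) ?_
    rw [discrim] at hdiscrim ⊢
    nlinarith [mul_le_mul_of_nonneg_left h13 (mul_nonneg ha hc),
      mul_nonneg hdiscrim (sq_nonneg (s 2))]
  rcases (hnonneg 1).eq_or_lt' with h1 | h1
  · have h2 : s 2 = 0 := by nlinarith [hnonneg 2]
    have h3 : s 3 = 0 := by nlinarith [hnonneg 3]
    simp [Cubic.discr, h1, h2, h3]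
  set u := s 0 * s 2 / s 1 ^ 2 with hu
  set v := s 0 ^ 2 * s 3 / s 1 ^ 3 with hv
  have hu0 : 0 ≤ u := div_nonneg (mul_nonneg h0.le (hnonneg 2)) (by positivity)
  have hu1 : u ≤ 1 := (div_le_one (by positivity)).mpr (by linarith)
  have hv0 : 0 ≤ v := div_nonneg (mul_nonneg (by positivity) (hnonneg 3)) (by positivity)
  have huv : 2 * u - 1 ≤ v := by
    rw [hu, hv]
    field_simp
    linarith
  have hvu : v ≤ u ^ 2 := by
    rw [hu, hv]
    field_simp
    linarith
  have hscale := cubic_discr_scale (a * v) (b * u) c d (s 0) (s 1 / s 0)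
  rw [show s 0 * (s 1 / s 0) ^ 3 * (a * v) = a * s 3 by rw [hv]; field_simp,
    show s 0 * (s 1 / s 0) ^ 2 * (b * u) = b * s 2 by rw [hu]; field_simp,
    show s 0 * (s 1 / s 0) * c = c * s 1 by field_simp, mul_comm (s 0) d] at hscale
  rw [hscale]
  exact mul_nonneg (by positivity) (cubic_discr_nonneg_of_multipliers ⟨hu0, hu1⟩
    ⟨max_le hv0 huv, hvu⟩ ha hb hc hd hdiscr hdiscrim)

end MultiplyPositive

section TotallyPositiveInverse

open PowerSeries

variable {R : Type*} [CommRing R]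

theorem det_of_last_row_eq_single {n : ℕ} {B : Matrix (Fin (n + 1)) (Fin (n + 1)) R}
    {j : Fin (n + 1)} (hB : B (Fin.last n) = Pi.single j 1) :
    B.det = (-1) ^ (n + j : ℕ) * (B.submatrix Fin.castSucc j.succAbove).det := by
  rw [Matrix.det_succ_row B (Fin.last n), Fintype.sum_eq_single j fun q hq => by simp [hB, hq]]
  simp [hB, ← Fin.succAbove_last]

theorem det_of_rows_eq_single {n : ℕ} {B : Matrix (Fin (n + 2)) (Fin (n + 2)) R}
    (hB : ∀ p : Fin n, B p.castSucc.castSucc = Pi.single p.castSucc.castSucc 1) :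
    B.det = B (Fin.last n).castSucc (Fin.last n).castSucc * B (Fin.last _) (Fin.last _) -
      B (Fin.last n).castSucc (Fin.last _) * B (Fin.last _) (Fin.last n).castSucc := by
  induction n with
  | zero => simp [Matrix.det_fin_two]
  | succ n ih =>
    have hB0 : B 0 = Pi.single 0 1 := hB 0
    have hminor (p : Fin n) : B.submatrix Fin.succ Fin.succ p.castSucc.castSucc =
        Pi.single p.castSucc.castSucc 1 := by
      ext q
      have := congrFun (hB p.succ) q.succ
      simpa [Pi.single_apply] using this
    rw [Matrix.det_succ_row_zero, Fintype.sum_eq_single 0 fun q hq => by simp [hB0, hq]]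
    simpa [hB0, Fin.succ_castSucc] using ih hminor

theorem det_one_updateRow_updateRow {n : ℕ} (u v : Fin (n + 2) → R) :
    (((1 : Matrix _ _ R).updateRow (Fin.last n).castSucc u).updateRow (Fin.last (n + 1)) v).det =
      u (Fin.last n).castSucc * v (Fin.last (n + 1)) -
        u (Fin.last (n + 1)) * v (Fin.last n).castSucc := by
  rw [det_of_rows_eq_single fun p => ?_]
  · simp [Fin.castSucc_ne_last]
  · ext q
    simp [Fin.castSucc_ne_last, Matrix.one_apply, Pi.single_apply, eq_comm]

theorem det_updateRow_single_zero_updateRow_single_succ {n : ℕ}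
    (M : Matrix (Fin (n + 2)) (Fin (n + 2)) R) (j : Fin (n + 1)) :
    ((M.updateRow (Fin.last n).castSucc (Pi.single 0 1)).updateRow (Fin.last (n + 1))
      (Pi.single j.succ 1)).det = 
        (-1) ^ (j : ℕ) * (M.submatrix (fun p : Fin n => p.castSucc.castSucc)
          fun q => j.succ.succAbove q.succ).det := by
  rw [det_of_last_row_eq_single (j := j.succ) (by simp),
    det_of_last_row_eq_single (j := 0) ?_, ← mul_assoc, ← pow_add]
  · congr 1
    · have hexp : n + 1 + (j.succ : ℕ) + (n + ((0 : Fin (n + 1)) : ℕ)) = 2 * (n + 1) + j := by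
        rw [Fin.val_succ, Fin.val_zero]
        ring
      rw [hexp, pow_add, pow_mul, neg_one_sq, one_pow, one_mul]
    · congr 1
      ext p q
      simp [Fin.castSucc_ne_last]
  · ext q
    simp [Fin.castSucc_ne_last, Pi.single_apply, Fin.succAbove_eq_zero_iff (Fin.succ_ne_zero j)]

/-- The leading `N × N` block of the Toeplitz matrix of the coefficients of a power series. -/
noncomputable def truncatedToeplitz (f : R⟦X⟧) (N : ℕ) : Matrix (Fin N) (Fin N) R :=
  (toeplitz fun k => coeff k f).submatrix Fin.val Fin.val

theorem truncatedToeplitz_mul (f g : R⟦X⟧) (N : ℕ) :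
    truncatedToeplitz (f * g) N = truncatedToeplitz f N * truncatedToeplitz g N := by
  ext i j
  symm
  simp only [truncatedToeplitz, Matrix.mul_apply, Matrix.submatrix_apply]
  rw [Fin.sum_univ_eq_sum_range fun k => toeplitz (fun k => coeff k f) i k *
    toeplitz (fun k => coeff k g) k j]
  rcases lt_or_ge (j : ℕ) i with hij | hij
  · rw [toeplitz_of_lt _ hij]
    refine Finset.sum_eq_zero fun k _ => ?_
    rcases lt_or_ge k (i : ℕ) with hk | hk
    · rw [toeplitz_of_lt _ hk, zero_mul]
    · rw [toeplitz_of_lt (i := k) _ (by omega), mul_zero]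
  · rw [toeplitz_of_le _ hij, coeff_mul, Finset.Nat.sum_antidiagonal_eq_sum_range_succ_mk]
    have hIco : Finset.Ico (i : ℕ) (j + 1) ⊆ Finset.range N := fun k hk => by
      rw [Finset.mem_Ico] at hk
      rw [Finset.mem_range]
      omega
    rw [← Finset.sum_subset hIco, Finset.sum_Ico_eq_sum_range, Nat.sub_add_comm hij]
    · refine Finset.sum_congr rfl fun k hk => ?_
      rw [Finset.mem_range] at hk
      rw [toeplitz_of_le _ (by omega), toeplitz_of_le _ (by omega)]
      congr 3 <;> omega
    · intro k _ hk
      rw [Finset.mem_Ico, not_and_or, not_le, not_lt] at hk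
      rcases hk with hk | hk
      · rw [toeplitz_of_lt _ hk, zero_mul]
      · rw [toeplitz_of_lt (i := k) _ (by omega), mul_zero]

theorem truncatedToeplitz_one (N : ℕ) : truncatedToeplitz (1 : R⟦X⟧) N = 1 := by
  ext i j
  rw [truncatedToeplitz, Matrix.submatrix_apply, Matrix.one_apply]
  rcases lt_trichotomy i j with h | rfl | h
  · rw [toeplitz_of_le _ (Fin.val_fin_le.mpr h.le), coeff_one, if_neg (by omega), if_neg h.ne]
  · simp [toeplitz_of_le]
  · rw [toeplitz_of_lt _ (Fin.val_fin_lt.mpr h), if_neg h.ne']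

theorem det_truncatedToeplitz (f : R⟦X⟧) (N : ℕ) :
    (truncatedToeplitz f N).det = constantCoeff f ^ N := by
  have htri : (truncatedToeplitz f N).IsUpperTriangular := fun i j hji =>
    toeplitz_of_lt (fun k => coeff k f) (show (j : ℕ) < i from hji)
  rw [Matrix.det_of_isUpperTriangular htri]
  simp [truncatedToeplitz, toeplitz_of_le]

-- Replace the last two rows of the truncated Toeplitz matrix of `f` by standard basis vectors and
-- multiply by the truncated Toeplitz matrix of its inverse `g`.
theorem det_toeplitz_mul_constantCoeff_pow {f g : R⟦X⟧} (hfg : f * g = 1) (n : ℕ)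
    (j : Fin (n + 1)) :
    (-1) ^ (j : ℕ) * ((toeplitz fun k => coeff k f).submatrix (Fin.val : Fin n → ℕ)
        fun q => (j.succ.succAbove q.succ : ℕ)).det * constantCoeff g ^ (n + 2) =
      coeff n g * toeplitz (fun k => coeff k g) (j + 1) (n + 1) -
        coeff (n + 1) g * toeplitz (fun k => coeff k g) (j + 1) n := by
  have hminor : (toeplitz fun k => coeff k f).submatrix (Fin.val : Fin n → ℕ)
      (fun q : Fin n => (j.succ.succAbove q.succ : ℕ)) = (truncatedToeplitz f (n + 2)).submatrix
        (fun p : Fin n => p.castSucc.castSucc) (fun q => j.succ.succAbove q.succ) := rfl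
  rw [hminor, ← det_updateRow_single_zero_updateRow_single_succ, ← det_truncatedToeplitz,
    ← Matrix.det_mul, Matrix.updateRow_mul, Matrix.updateRow_mul, ← truncatedToeplitz_mul, hfg,
    truncatedToeplitz_one, Matrix.single_one_vecMul, Matrix.single_one_vecMul,
    det_one_updateRow_updateRow]
  simp [truncatedToeplitz, toeplitz_of_le]

theorem constantCoeff_rescale (c : R) (f : R⟦X⟧) :
    constantCoeff (rescale c f) = constantCoeff f := by
  rw [← coeff_zero_eq_constantCoeff_apply, coeff_rescale, pow_zero, one_mul,
    coeff_zero_eq_constantCoeff_apply]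

theorem toeplitz_coeff_rescale_neg_one (f : R⟦X⟧) (i j : ℕ) :
    toeplitz (fun k => coeff k (rescale (-1) f)) i j =
      (-1) ^ (i + j) * toeplitz (fun k => coeff k f) i j := by
  rcases lt_or_ge j i with h | h
  · rw [toeplitz_of_lt _ h, toeplitz_of_lt _ h, mul_zero]
  · obtain ⟨k, rfl⟩ := Nat.exists_eq_add_of_le h
    rw [toeplitz_of_le _ h, toeplitz_of_le _ h, Nat.add_sub_cancel_left, coeff_rescale,
      ← add_assoc, pow_add _ (i + i), (Even.add_self i).neg_one_pow, one_mul]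

section

variable {f g : ℝ⟦X⟧}

theorem constantCoeff_pos_of_mul_rescale_eq_one (hf : IsTotallyPositive fun k => coeff k f)
    (hfg : f * rescale (-1) g = 1) : 0 < constantCoeff g := by
  have hfg0 := congrArg constantCoeff hfg
  rw [map_mul, constantCoeff_rescale, map_one] at hfg0
  have hf0 : 0 ≤ constantCoeff f := by simpa using hf.nonneg 0
  exact pos_of_mul_pos_right (hfg0 ▸ one_pos) hf0

theorem coeff_succ_mul_toeplitz_le_of_mul_rescale_eq_one
    (hf : IsTotallyPositive fun k => coeff k f) (hfg : f * rescale (-1) g = 1) (n : ℕ)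
    (j : Fin (n + 1)) : coeff (n + 1) g * toeplitz (fun k => coeff k g) (j + 1) n ≤
      coeff n g * coeff (n - j) g := by
  have hcols : StrictMono fun q : Fin n => (j.succ.succAbove q.succ : ℕ) :=
    Fin.val_strictMono.comp ((Fin.strictMono_succAbove _).comp Fin.strictMono_succ)
  have hminor := hf n Fin.val _ Fin.val_strictMono hcols
  have hjacobi := det_toeplitz_mul_constantCoeff_pow hfg n j
  rw [toeplitz_coeff_rescale_neg_one, toeplitz_coeff_rescale_neg_one, coeff_rescale, coeff_rescale,
    constantCoeff_rescale, toeplitz_of_le _ (by omega), Nat.add_sub_add_right] at hjacobi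
  have hsign : ((-1 : ℝ) ^ n) ^ 2 = 1 := by rw [← pow_mul, mul_comm, pow_mul, neg_one_sq, one_pow]
  have hne : (-1 : ℝ) ^ (j : ℕ) ≠ 0 := pow_ne_zero _ (neg_ne_zero.mpr one_ne_zero)
  have hconst := constantCoeff_pos_of_mul_rescale_eq_one hf hfg
  refine sub_nonneg.mp ((mul_nonneg hminor (pow_nonneg hconst.le (n + 2))).trans_eq ?_)
  refine mul_left_cancel₀ hne ?_
  rw [← mul_assoc]
  refine hjacobi.trans ?_
  linear_combination (-1) ^ (j : ℕ) * (coeff n g * coeff (n - j) g -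
    coeff (n + 1) g * toeplitz (fun k => coeff k g) (j + 1) n) * hsign

theorem coeff_nonneg_of_mul_rescale_eq_one (hf : IsTotallyPositive fun k => coeff k f)
    (hfg : f * rescale (-1) g = 1) (n : ℕ) : 0 ≤ coeff n g := by
  have hle := coeff_succ_mul_toeplitz_le_of_mul_rescale_eq_one hf hfg n (Fin.last n)
  rw [toeplitz_of_lt _ (by simp), mul_zero, Fin.val_last, Nat.sub_self] at hle
  exact nonneg_of_mul_nonneg_left hle
    (by simpa using constantCoeff_pos_of_mul_rescale_eq_one hf hfg)

theorem coeff_mul_coeff_succ_le_of_mul_rescale_eq_one (hf : IsTotallyPositive fun k => coeff k f)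
    (hfg : f * rescale (-1) g = 1) {k l : ℕ} (hkl : k ≤ l) :
    coeff k g * coeff (l + 1) g ≤ coeff (k + 1) g * coeff l g := by
  rcases hkl.eq_or_lt with rfl | hlt
  · exact (mul_comm _ _).le
  · have hle := coeff_succ_mul_toeplitz_le_of_mul_rescale_eq_one hf hfg l ⟨l - k - 1, by omega⟩
    rwa [toeplitz_of_le _ (by dsimp only; omega), show l - (l - k - 1 + 1) = k by omega,
      show l - (l - k - 1) = k + 1 by omega, mul_comm, mul_comm (coeff l g)] at hle

end

end TotallyPositiveInverse

section Oscillation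

open Filter Topology

theorem eq_zero_of_quadratic_recurrence {α β γ : ℝ} (hα : 0 < α) (hdiscr : discrim α β γ < 0)
    {u : ℕ → ℝ} (hu : ∀ n, 0 ≤ u n)
    (hrec : ∀ n, α * u (n + 2) + β * u (n + 1) + γ * u n = 0) : u 0 = 0 := by
  by_contra hu0
  have hdef : β ^ 2 < 4 * α * γ := sub_neg.mp hdiscr
  have hγ : 0 < γ := by
    have := (sq_nonneg β).trans_lt hdef
    exact pos_of_mul_pos_right this (by positivity)
  have hpos (n : ℕ) : 0 < u n := by
    induction n with
    | zero => exact (hu 0).lt_of_ne' hu0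
    | succ n ih =>
      refine (hu _).lt_of_ne' fun hzero => ?_
      have hn := hrec n
      rw [hzero, mul_zero, add_zero] at hn
      exact (add_pos_of_nonneg_of_pos (mul_nonneg hα.le (hu _)) (mul_pos hγ ih)).ne' hn
  have hlog (n : ℕ) : u (n + 2) * u n ≤ u (n + 1) * u (n + 1) := by
    have hform : 0 ≤ (2 * α * u (n + 1) + β * u n) ^ 2 + (4 * α * γ - β ^ 2) * u n ^ 2 := by
      have := sub_pos.mpr hdef
      positivity
    refine sub_nonneg.mp (nonneg_of_mul_nonneg_right (a := 4 * α ^ 2) ?_ (by positivity))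
    linear_combination hform + 4 * α * u n * hrec n
  have hanti : Antitone fun n => u (n + 1) / u n := antitone_nat_of_succ_le fun n => by
    rw [div_le_div_iff₀ (hpos _) (hpos _)]
    exact hlog n
  obtain ⟨L, hL⟩ : ∃ L, Tendsto (fun n => u (n + 1) / u n) atTop (𝓝 L) :=
    ⟨_, tendsto_atTop_ciInf hanti ⟨0, by rintro _ ⟨n, rfl⟩; exact div_nonneg (hu _) (hu _)⟩⟩
  have hroot : α * (L * L) + β * L + γ = 0 := by
    have hlim := (((hL.comp (tendsto_add_atTop_nat 1)).mul hL).const_mul α).add (hL.const_mul β)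
      |>.add_const γ
    refine tendsto_nhds_unique hlim (tendsto_const_nhds.congr fun n => ?_)
    have := (hpos n).ne'
    have := (hpos (n + 1)).ne'
    simp only [Function.comp_apply]
    field_simp
    linear_combination - hrec n
  exact quadratic_ne_zero_of_discrim_ne_sq (fun s hs => by nlinarith [sq_nonneg s]) L hroot

theorem mul_succ_le_mul_of_log_concave {h : ℕ → ℝ} (hnonneg : ∀ k, 0 ≤ h k)
    (hlog : ∀ {k l : ℕ}, k ≤ l → h k * h (l + 1) ≤ h (k + 1) * h l) {c d : ℝ} (hc : 0 ≤ c)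
    {k l : ℕ} (hkl : k ≤ l) (hlt : c * h (k + 1) < d * h k) : c * h (l + 1) ≤ d * h l := by
  have hk : 0 < h k := (hnonneg k).lt_of_ne' fun hzero => by
    rw [hzero, mul_zero] at hlt
    exact hlt.not_ge (mul_nonneg hc (hnonneg _))
  refine le_of_mul_le_mul_right ?_ hk
  calc c * h (l + 1) * h k = c * (h k * h (l + 1)) := by ring
    _ ≤ c * (h (k + 1) * h l) := mul_le_mul_of_nonneg_left (hlog hkl) hc
    _ = c * h (k + 1) * h l := by ring
    _ ≤ d * h k * h l := mul_le_mul_of_nonneg_right hlt.le (hnonneg l)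
    _ = d * h l * h k := by ring

-- By log-concavity of `h` the sequence `u` changes sign at most once, so it or its tail is a
-- nonnegative solution of the recurrence up to sign.
theorem eq_zero_of_quadratic_recurrence_of_log_concave {α β γ : ℝ} (hα : 0 < α)
    (hdiscr : discrim α β γ < 0) {h u : ℕ → ℝ} (hnonneg : ∀ k, 0 ≤ h k)
    (hlog : ∀ {k l : ℕ}, k ≤ l → h k * h (l + 1) ≤ h (k + 1) * h l) {c d : ℝ} (hc : 0 ≤ c)
    (hu0 : u 0 = c * h 0) (husucc : ∀ k, u (k + 1) = c * h (k + 1) - d * h k)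
    (hrec : ∀ n, α * u (n + 2) + β * u (n + 1) + γ * u n = 0) : u 0 = 0 := by
  by_cases hu : ∀ n, 0 ≤ u n
  · exact eq_zero_of_quadratic_recurrence hα hdiscr hu hrec
  · exfalso
    push Not at hu
    obtain ⟨_ | m, hm⟩ := hu
    · exact hm.not_ge (hu0 ▸ mul_nonneg hc (hnonneg 0))
    · have hlt : c * h (m + 1) < d * h m := sub_neg.mp (husucc m ▸ hm)
      have htail (n : ℕ) : 0 ≤ -u (m + 1 + n) := by
        rw [show m + 1 + n = m + n + 1 by omega, husucc, neg_sub, sub_nonneg]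
        exact mul_succ_le_mul_of_log_concave hnonneg hlog hc (Nat.le_add_right m n) hlt
      have hzero := eq_zero_of_quadratic_recurrence hα hdiscr htail fun n => by
        linear_combination -hrec (m + 1 + n)
      exact hm.ne (neg_eq_zero.mp hzero)

end Oscillation

section QuadraticFactor

open PowerSeries

theorem exists_mul_rescale_neg_one_eq_one {K : Type*} [Field K] {f : K⟦X⟧}
    (hf : constantCoeff f ≠ 0) : ∃ g, f * rescale (-1) g = 1 :=
  ⟨rescale (-1) f⁻¹, by
    rw [rescale_rescale, neg_one_mul, neg_neg, rescale_one, RingHom.id_apply,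
      PowerSeries.mul_inv_cancel f hf]⟩

theorem rescale_C {R : Type*} [CommSemiring R] (a r : R) : rescale a (C r) = C r := by
  ext n
  rw [coeff_rescale, coeff_C]
  split_ifs with hn
  · rw [hn, pow_zero, one_mul]
  · rw [mul_zero]

theorem discrim_nonneg_of_isTotallyPositive_coeff_quadratic_mul_linear {β γ c d : ℝ}
    (hTP : IsTotallyPositive fun k =>
      coeff k ((X ^ 2 + C β * X + C γ) * (C d * X + C c) : ℝ⟦X⟧)) (hc : c ≠ 0) :
    0 ≤ discrim 1 β γ := by
  by_contra! hdiscr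
  have hγ : 0 < γ := by
    rw [discrim] at hdiscr
    nlinarith [sq_nonneg β]
  obtain ⟨g, hg⟩ := exists_mul_rescale_neg_one_eq_one
    (f := (X ^ 2 + C β * X + C γ) * (C d * X + C c)) (by simp [hγ.ne', hc])
  have hc' : 0 ≤ c := nonneg_of_mul_nonneg_right (by simpa using hTP.nonneg 0) hγ
  set u : ℝ⟦X⟧ := (C c - C d * X) * g with hu
  have hqu : (X ^ 2 - C β * X + C γ) * u = 1 := by
    have hresc := congrArg (rescale (-1)) hg
    simp only [map_mul, map_add, map_pow, rescale_C, rescale_neg_one_X, rescale_rescale, map_one,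
      neg_one_mul, neg_neg, rescale_one, RingHom.id_apply] at hresc
    rw [hu, ← hresc]
    ring
  have hrec (n : ℕ) : γ * coeff (n + 2) u + -β * coeff (n + 1) u + 1 * coeff n u = 0 := by
    have hcoeff := congrArg (coeff (n + 2)) hqu
    simp only [add_mul, sub_mul, mul_assoc, map_add, map_sub, coeff_X_pow_mul',
      le_add_iff_nonneg_left, zero_le, ↓reduceIte, add_tsub_cancel_right, coeff_C_mul,
      coeff_succ_X_mul, coeff_one, Nat.add_eq_zero_iff, OfNat.ofNat_ne_zero, and_false] at hcoeff
    linear_combination hcoeff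
  have hu0 : coeff 0 u = 0 :=
    eq_zero_of_quadratic_recurrence_of_log_concave (u := fun k => coeff k u) hγ
      (by simpa [discrim] using hdiscr) (coeff_nonneg_of_mul_rescale_eq_one hTP hg)
      (coeff_mul_coeff_succ_le_of_mul_rescale_eq_one hTP hg) hc' (d := d) (by simp [hu])
      (fun k => by simp [hu, sub_mul, mul_assoc]) hrec
  have hconst : γ * constantCoeff u = 1 := by simpa using congrArg constantCoeff hqu
  rw [← coeff_zero_eq_constantCoeff_apply, hu0, mul_zero] at hconst
  exact zero_ne_one hconst

end QuadraticFactor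

section CubicFromTotalPositivity

open Polynomial

theorem splits_of_isTotallyPositive_of_coeff_zero_ne_zero {P : ℝ[X]}
    (hP : IsTotallyPositive P.coeff) (hdeg : P.natDegree ≤ 3) (h0 : P.coeff 0 ≠ 0) :
    P.Splits := by
  by_contra hsplits
  obtain ⟨β, γ, d, c, hdiscr, rfl⟩ := exists_eq_quadratic_mul_linear_of_not_splits hsplits hdeg
  refine hdiscr.not_ge (discrim_nonneg_of_isTotallyPositive_coeff_quadratic_mul_linear
    (c := c) (d := d) ?_ ?_)
  · convert hP with k
    rw [← Polynomial.coeff_coe]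
    simp
  · exact right_ne_zero_of_mul (a := γ) (by simpa [mul_coeff_zero] using h0)

theorem splits_of_isTotallyPositive {P : ℝ[X]} (hP : IsTotallyPositive P.coeff)
    (hdeg : P.natDegree ≤ 3) : P.Splits := by
  induction P using Polynomial.recOnHorner with
  | M0 => exact Splits.zero
  | MC p a hp0 ha _ =>
    exact splits_of_isTotallyPositive_of_coeff_zero_ne_zero hP hdeg (by simpa [hp0] using ha)
  | MX p hp ih =>
    rw [natDegree_mul_X hp] at hdeg
    exact (ih (by simpa using hP.comp_succ (by simp)) (by omega)).mul Splits.X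

theorem isTotallyPositive_iff_splits {P : ℝ[X]} (hcoeff : ∀ k, 0 ≤ P.coeff k)
    (hdeg : P.natDegree ≤ 3) : IsTotallyPositive P.coeff ↔ P.Splits :=
  ⟨fun hP => splits_of_isTotallyPositive hP hdeg, fun hP => .of_splits hP hcoeff⟩

end CubicFromTotalPositivity

section FourTermSequences

variable {a : ℕ → ℝ}

theorem coeff_toPoly_of_four_le (h4 : ∀ k, 4 ≤ k → a k = 0) :
    (Cubic.mk (a 3) (a 2) (a 1) (a 0)).toPoly.coeff = a := by
  funext k
  match k with
  | 0 => exact Cubic.coeff_eq_d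
  | 1 => exact Cubic.coeff_eq_c
  | 2 => exact Cubic.coeff_eq_b
  | 3 => exact Cubic.coeff_eq_a
  | k + 4 => rw [Cubic.coeff_eq_zero (by omega), h4 _ (by omega)]

theorem isTotallyPositive_iff_cubic_splits (hnn : ∀ k, 0 ≤ a k) (h4 : ∀ k, 4 ≤ k → a k = 0) :
    IsTotallyPositive a ↔ (Cubic.mk (a 3) (a 2) (a 1) (a 0)).toPoly.Splits := by
  have hcoeff := coeff_toPoly_of_four_le h4
  rw [← isTotallyPositive_iff_splits (by simpa only [hcoeff] using hnn) (cubic_natDegree_le _),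
    hcoeff]

theorem cubic_splits_iff_forall_complex {a b c d : ℝ} (hP : (Cubic.mk a b c d).toPoly ≠ 0) :
    (Cubic.mk a b c d).toPoly.Splits ↔
      ∀ z : ℂ, (d : ℂ) + c * z + b * z ^ 2 + a * z ^ 3 = 0 → ∃ x : ℝ, z = x := by
  rw [splits_iff_forall_aeval_complex hP]
  refine forall_congr' fun z => ?_
  have hz : Polynomial.aeval z (Cubic.mk a b c d).toPoly =
      (d : ℂ) + c * z + b * z ^ 2 + a * z ^ 3 := by
    simp [Cubic.toPoly]
    ring
  rw [hz]

theorem IsTPPreserver.cubic_splits (ha : IsTPPreserver a) (hnn : ∀ k, 0 ≤ a k)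
    (h4 : ∀ k, 4 ≤ k → a k = 0) :
    (Cubic.mk (a 3) (a 2) (a 1) (a 0)).toPoly.Splits ∧
      (Cubic.mk (a 3) (a 2) (a 1) 0).toPoly.Splits := by
  constructor
  · rw [← isTotallyPositive_iff_cubic_splits hnn h4]
    simpa using ha _ isTotallyPositive_one
  · have hshift := ha _ isTotallyPositive_zero_one
    rw [isTotallyPositive_iff_cubic_splits hshift.nonneg
      fun k hk => by rw [h4 k hk, zero_mul]] at hshift
    simpa using hshift

theorem isTotallyPositive_mul_of_isMultiplyPositive {b : ℕ → ℝ} (hb : IsMultiplyPositive 3 b)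
    (hnn : ∀ k, 0 ≤ a k) (h4 : ∀ k, 4 ≤ k → a k = 0)
    (hsplits : (Cubic.mk (a 3) (a 2) (a 1) (a 0)).toPoly.Splits)
    (hsplits₀ : (Cubic.mk (a 3) (a 2) (a 1) 0).toPoly.Splits) :
    IsTotallyPositive fun k => a k * b k := by
  have hdiscrim : 0 ≤ discrim (a 3) (a 2) (a 1) := by
    rw [cubic_splits_iff_discr_nonneg, cubic_discr_of_d_eq_zero] at hsplits₀
    rcases (hnn 1).eq_or_lt' with h1 | h1
    · rw [h1, discrim, mul_zero, sub_zero]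
      exact sq_nonneg _
    · exact nonneg_of_mul_nonneg_right hsplits₀ (by positivity)
  rw [isTotallyPositive_iff_cubic_splits (fun k => mul_nonneg (hnn k) (hb.nonneg (by norm_num) k))
    fun k hk => by rw [h4 k hk, zero_mul], cubic_splits_iff_discr_nonneg]
  exact cubic_discr_nonneg_of_isMultiplyPositive hb (hnn 3) (hnn 2) (hnn 1) (hnn 0)
    (cubic_splits_iff_discr_nonneg.mp hsplits) hdiscrim

end FourTermSequences

theorem stmt_2_general (a : ℕ → ℝ) (hnn : ∀ k, 0 ≤ a k) (hne : ∃ k ≠ 0, a k ≠ 0)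
    (h4 : ∀ k, 4 ≤ k → a k = 0) :
    (IsTPPreserver a ↔
      ((∀ z : ℂ, (a 0 : ℂ) + (a 1 : ℂ) * z + (a 2 : ℂ) * z ^ 2 + (a 3 : ℂ) * z ^ 3 = 0 →
          ∃ x : ℝ, z = (x : ℂ)) ∧
       (∀ z : ℂ, (a 1 : ℂ) * z + (a 2 : ℂ) * z ^ 2 + (a 3 : ℂ) * z ^ 3 = 0 →
          ∃ x : ℝ, z = (x : ℂ)))) ∧
    (IsTPPreserver a ↔
      ∀ b : ℕ → ℝ, IsMultiplyPositive 3 b → IsTotallyPositive fun k => a k * b k) := by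
  have hne_zero (d : ℝ) : (Cubic.mk (a 3) (a 2) (a 1) d).toPoly ≠ 0 := fun hzero => by
    obtain ⟨ha3, ha2, ha1, -⟩ := Cubic.mk.inj ((Cubic.toPoly_eq_zero_iff _).mp hzero)
    obtain ⟨_ | _ | _ | _ | k, hk, hak⟩ := hne
    · exact hk rfl
    exacts [hak ha1, hak ha2, hak ha3, hak (h4 _ (by omega))]
  have hsplits := cubic_splits_iff_forall_complex (hne_zero (a 0))
  have hsplits₀ := cubic_splits_iff_forall_complex (hne_zero 0)
  simp only [Complex.ofReal_zero, zero_add] at hsplits₀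
  rw [← hsplits, ← hsplits₀]
  have hpreserver : (∀ b, IsMultiplyPositive 3 b → IsTotallyPositive fun k => a k * b k) →
      IsTPPreserver a := fun h b hb => h b (hb.isMultiplyPositive 3)
  have hmap (h : _ ∧ _) (b : ℕ → ℝ) (hb : IsMultiplyPositive 3 b) :=
    isTotallyPositive_mul_of_isMultiplyPositive hb hnn h4 h.1 h.2
  exact ⟨⟨fun ha => ha.cubic_splits hnn h4, fun h => hpreserver (hmap h)⟩,
    ⟨fun ha => hmap (ha.cubic_splits hnn h4), hpreserver⟩⟩

/-- four-term sequences. -/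
theorem stmt_2 (a : ℕ → ℝ) (hpos : ∀ k ≤ 3, 0 < a k) (h4 : ∀ k, 4 ≤ k → a k = 0) :
    (IsTPPreserver a ↔
      ((∀ z : ℂ, (a 0 : ℂ) + (a 1 : ℂ) * z + (a 2 : ℂ) * z ^ 2 + (a 3 : ℂ) * z ^ 3 = 0 →
          ∃ x : ℝ, z = (x : ℂ)) ∧
       (∀ z : ℂ, (a 1 : ℂ) * z + (a 2 : ℂ) * z ^ 2 + (a 3 : ℂ) * z ^ 3 = 0 →
          ∃ x : ℝ, z = (x : ℂ)))) ∧
    (IsTPPreserver a ↔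
      ∀ b : ℕ → ℝ, IsMultiplyPositive 3 b → IsTotallyPositive fun k => a k * b k) :=
  stmt_2_general a (fun k => (le_or_gt k 3).elim (fun hk => (hpos k hk).le) fun hk => (h4 k hk).ge)
    ⟨1, one_ne_zero, (hpos 1 (by norm_num)).ne'⟩ h4
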